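/- Let κ be a singular cardinal and λ < κ a cardinal such that μ^λ ≤ κ⁺ for every cardinal μ < κ. If κ⁺ carries a κ-indecomposable uniform ultrafilter, then κ^λ ≤ κ⁺. -/

import Mathlib

open Cardinal Set

universe u v

/-- An ultrafilter is uniform if all of its members have full cardinality. -/
def Uniform {α : Type u} (U : Ultrafilter α) : Prop := ∀ X ∈ U, #X = #α

/-- An ultrafilter `U` over `S` is `l`-decomposable if there is `f : S → l`
such that preimages of sets of size `< l` are not in `U`. -/
def Decomposable {S : Type u} (U : Ultrafilter S) (l : Cardinal.{v}) : Prop :=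
  ∃ f : S → l.out, ∀ X : Set l.out, #X < l → f ⁻¹' X ∉ U

/-- The character of an ultrafilter: the least cardinality of a base. -/
noncomputable def charU {α : Type u} (U : Ultrafilter α) : Cardinal.{u} :=
  sInf {c | ∃ B : Set (Set α), #B = c ∧ (∀ X ∈ B, X ∈ U) ∧ ∀ Y ∈ U, ∃ X ∈ B, X ⊆ Y}

/-- The ultrafilter number at a cardinal `κ`: the minimal character of a
uniform ultrafilter over (a set of size) `κ`. -/
noncomputable def uNumber (κ : Cardinal.{u}) : Cardinal.{u} :=
  sInf {c | ∃ U : Ultrafilter κ.out, Uniform U ∧ charU U = c}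

/-!
When `l < cof κ`, or when `κ ≤ μ ^ l` for some `μ < κ`, the bound is elementary cardinal arithmetic.
Otherwise indecomposability yields (following Kanamori) a family of `κ⁺` sets `A α ∈ U` such that
every point `s` lies in fewer than `κ` of them.

Suppose some function into `κ` is unbounded modulo `U`. Take a scale `h` of length `κ⁺` on an index
set of size `cof κ`, with an exact upper bound `p` whose values have cofinalities tending to `κ`.
Each `s` can then be assigned an index `f s` and an `H s < p (f s)` above `h α (f s)` whenever
`s ∈ A α`. By indecomposability `H` takes fewer than `κ` values, hence is dominated by a function
below `p` that depends on `f s` only, and this contradicts exactness.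

So every function into `κ` is bounded modulo `U`. It follows that there is `ν < κ` such that for
each function from `l` to `κ` some `s` lying in at most `ν` of the sets `A α` also lies in `A α` for
the codes `α` of cofinally many of its truncations. The function is determined by `s` and those
codes, which leaves only `κ⁺ * ν ^ cof κ` possibilities.
-/

open Filter

theorem exists_forall_lt_of_mk_lt_cof {α ι : Type u} [LinearOrder α] (f : ι → α)
    (h : #ι < Order.cof α) : ∃ b, ∀ i, f i < b := by
  have hf : ¬ IsCofinal (range f) := fun hf => ((Order.cof_le hf).trans mk_range_le).not_gt h
  simpa only [not_isCofinal_iff, forall_mem_range] using hf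

theorem exists_forall_lt_of_mk_lt_cof_Iio {α ι : Type u} [LinearOrder α] {p : α} (f : ι → α)
    (h : #ι < Order.cof (Iio p)) : ∃ b < p, ∀ i, f i < p → f i < b := by
  obtain ⟨b, hb⟩ := exists_forall_lt_of_mk_lt_cof
    (fun i : {i // f i < p} => (⟨f i, i.2⟩ : Iio p)) ((mk_subtype_le _).trans_lt h)
  exact ⟨b, b.2, fun i hi => hb ⟨i, hi⟩⟩

theorem cof_lt_of_mk_le {α : Type u} [LinearOrder α] [WellFoundedLT α] {κ : Cardinal.{u}}
    (hκ : κ.ord.cof < κ) (hα : #α ≤ κ) : Order.cof α < κ := by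
  refine ((Order.cof_le_cardinalMk α).trans hα).lt_of_ne fun h => hκ.ne ?_
  rw [← h, Order.cof_ord_cof]

theorem exists_typein_eq {κ : Cardinal.{u}} {o : Ordinal.{u}} (h : o < κ.ord) :
    ∃ j : κ.ord.ToType, Ordinal.typein (α := κ.ord.ToType) (· < ·) j = o :=
  Ordinal.typein_surj (α := κ.ord.ToType) (· < ·) (by rwa [Ordinal.type_toType])

theorem exists_mk_Iio_eq {κ μ : Cardinal.{u}} (h : μ < κ) : ∃ j : κ.ord.ToType, #(Iio j) = μ := by
  obtain ⟨j, hj⟩ := exists_typein_eq (ord_lt_ord.2 h)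
  exact ⟨j, by rw [← card_ord μ, ← hj]; exact (Ordinal.card_typein (r := LT.lt) j).symm⟩

theorem exists_cof_Iio_eq {κ ν : Cardinal.{u}} (hν : ν.IsRegular) (h : ν < κ) :
    ∃ j : κ.ord.ToType, Order.cof (Iio j) = ν := by
  obtain ⟨j, hj⟩ := exists_typein_eq (ord_lt_ord.2 h)
  exact ⟨j, by rw [Order.cof_Iio, hj, hν.cof_ord]⟩

theorem cof_toType_of_isRegular {θ : Cardinal.{u}} (hθ : θ.IsRegular) :
    Order.cof θ.ord.ToType = θ := by
  rw [Ordinal.cof_toType, hθ.cof_ord]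

theorem mk_Iio_toType_lt {κ : Cardinal.{u}} (j : κ.ord.ToType) : #(Iio j) < κ := by
  simpa using mk_Iio_lt j

theorem mk_Iic_toType_lt {κ : Cardinal.{u}} (hκ : ℵ₀ ≤ κ) (j : κ.ord.ToType) : #(Iic j) < κ := by
  simpa using mk_Iic_lt j (by simp) (by simpa using hκ)

theorem exists_isLeast_of_wellFoundedLT {α : Type*} [LinearOrder α] [WellFoundedLT α] {s : Set α}
    (hs : s.Nonempty) : ∃ m, IsLeast s m :=
  ⟨_, wellFounded_lt.min_mem s hs, fun _ hx => wellFounded_lt.min_le hx⟩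

theorem exists_transfinite_sequence {α : Type u} [LinearOrder α] [WellFoundedLT α] {β : Type v}
    (Q : ∀ a : α, (Iio a → β) → β → Prop) (h : ∀ a f, ∃ b, Q a f b) :
    ∃ f : α → β, ∀ a, Q a (fun b => f b) (f a) := by
  choose next hnext using h
  refine ⟨(wellFounded_lt (α := α)).fix fun a f => next a fun b => f b b.2, fun a => ?_⟩
  rw [WellFounded.fix_eq]
  exact hnext a _

theorem exists_closed_set {I V : Type u} [Infinite I] (k : I → V) (Φ : (I → V) → I → V) :
    ∃ T : Set V, #T ≤ 2 ^ #I ∧ (∀ i, k i ∈ T) ∧ ∀ g, (∀ i, g i ∈ T) → ∀ i, Φ g i ∈ T := by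
  let arity : I ⊕ I → Type u := Sum.elim (fun _ => PEmpty) fun _ => I
  let op : (Σ a, arity a → V) → V
    | ⟨.inl i, _⟩ => k i
    | ⟨.inr i, g⟩ => Φ g i
  have hI : ℵ₀ ≤ #I := aleph0_le_mk I
  have hI2 : ℵ₀ ≤ 2 ^ #I := hI.trans (cantor _).le
  have harity (a : I ⊕ I) : ((2 : Cardinal) ^ #I) ^ #(arity a) ≤ 2 ^ #I := by
    rw [← power_mul]
    refine power_le_power_left two_ne_zero ?_
    rcases a with _ | _
    · simp only [arity, Sum.elim_inl, mk_pempty, mul_zero, zero_le]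
    · exact (mul_eq_self hI).le
  have hcard : (sum fun a => (2 ^ #I) ^ #(arity a)) ≤ 2 ^ #I :=
    calc (sum fun a => (2 ^ #I) ^ #(arity a)) ≤ #(I ⊕ I) * ⨆ a, (2 ^ #I) ^ #(arity a) :=
          sum_le_mk_mul_iSup _
      _ ≤ 2 ^ #I * 2 ^ #I := by
        rw [mk_sum, lift_id, add_eq_self hI]
        exact mul_le_mul' (cantor _).le (ciSup_le' harity)
      _ = 2 ^ #I := mul_eq_self hI2
  refine ⟨range (WType.elim V op), mk_range_le.trans (WType.cardinalMk_le_of_le hcard),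
    fun i => ⟨WType.mk (.inl i) PEmpty.elim, rfl⟩, fun g hg i => ?_⟩
  choose t ht using hg
  exact ⟨WType.mk (.inr i) t, congrFun (congrArg Φ (funext ht)) i⟩

theorem finite_of_strictAnti {α β : Type*} [LinearOrder α] [WellFoundedLT α] [Preorder β]
    [WellFoundedLT β] {f : α → β} (hf : StrictAnti f) : Finite α := by
  have : WellFoundedGT α := StrictAnti.wellFoundedGT hf
  exact Finite.of_wellFoundedLT_wellFoundedGT α

section Ultrafilter

variable {S : Type v} {U : Ultrafilter S}

theorem Uniform.decomposable {κ : Cardinal.{u}} {U : Ultrafilter κ.out} (hU : Uniform U) :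
    Decomposable U κ :=
  ⟨id, fun X hX hXU => hX.ne ((hU X hXU).trans (mk_out κ))⟩

theorem Decomposable.of_map {T : Type*} {g : S → T} {κ : Cardinal.{u}}
    (h : Decomposable (U.map g) κ) : Decomposable U κ :=
  let ⟨f, hf⟩ := h
  ⟨f ∘ g, hf⟩

theorem exists_mk_lt_of_not_decomposable {γ : Type u} {κ : Cardinal.{u}} (hU : ¬ Decomposable U κ)
    (hγ : #γ ≤ κ) (t : S → γ) : ∃ X : Set γ, #X < κ ∧ ∀ᶠ s in U, t s ∈ X := by
  rw [← mk_out κ] at hγ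
  obtain ⟨e⟩ := hγ
  simp only [Decomposable, not_exists, not_forall, not_not] at hU
  obtain ⟨X, hX, hXU⟩ := hU (e ∘ t)
  exact ⟨e ⁻¹' X, (mk_preimage_of_injective _ _ e.injective).trans_lt hX, hXU⟩

theorem Decomposable.exists_tendsto_atTop {κ : Cardinal.{u}} (h : Decomposable U κ) :
    ∃ g : S → κ.ord.ToType, Tendsto g U atTop := by
  obtain ⟨f, hf⟩ := h
  obtain ⟨e⟩ : Nonempty (κ.out ≃ κ.ord.ToType) :=
    Cardinal.eq.1 (by simp only [mk_out, mk_ord_toType])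
  refine ⟨e ∘ f, tendsto_atTop.2 fun b => ?_⟩
  have hb : #(e ⁻¹' Iio b) < κ :=
    (mk_preimage_of_injective _ _ e.injective).trans_lt (mk_Iio_toType_lt b)
  filter_upwards [Ultrafilter.compl_mem_iff_notMem.2 (hf _ hb)] with s hs
  exact not_lt.1 hs

/-- `(κ, θ)`-regularity of `U`: there are `θ` members of `U`, indexed here by the ordinals below
`θ`, such that every point lies in fewer than `κ` of them. -/
def RegularUltrafilter (U : Ultrafilter S) (κ θ : Cardinal.{u}) : Prop :=
  ∃ A : θ.ord.ToType → Set S, (∀ α, A α ∈ U) ∧ ∀ s, #{α | s ∈ A α} < κ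

theorem RegularUltrafilter.decomposable {κ : Cardinal.{u}} (hκ : ℵ₀ < κ)
    (h : RegularUltrafilter U ℵ₀ κ) : Decomposable U κ := by
  obtain ⟨A, hAU, hA⟩ := h
  by_contra hU
  have hJ : #κ.ord.ToType = κ := mk_ord_toType κ
  have : Infinite κ.ord.ToType := infinite_iff.2 (hκ.le.trans_eq hJ.symm)
  have hfin (s : S) : {α | s ∈ A α}.Finite := lt_aleph0_iff_set_finite.1 (hA s)
  obtain ⟨X, hX, hXU⟩ := exists_mk_lt_of_not_decomposable hU (by rw [mk_finset_of_infinite, hJ])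
    fun s => (hfin s).toFinset
  have hcover : ⋃ s : X, (s : Set κ.ord.ToType) = Set.univ := by
    refine eq_univ_of_forall fun α => ?_
    obtain ⟨s, hsX, hsA⟩ := (hXU.and (hAU α)).exists
    exact mem_iUnion.2 ⟨⟨_, hsX⟩, (hfin s).mem_toFinset.2 hsA⟩
  have hsmall : #(⋃ s : X, (s : Set κ.ord.ToType)) < κ :=
    (mk_iUnion_le _).trans_lt <| mul_lt_of_lt hκ.le hX <|
      (ciSup_le' fun s => (lt_aleph0_of_finite _).le).trans_lt hκ
  rw [hcover, mk_univ, hJ] at hsmall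
  exact hsmall.false

end Ultrafilter

section Regularity

variable {S : Type v} {U : Ultrafilter S} {V : Type u} [LinearOrder V]

/-- In the ultrapower of `V` by `U`, the internal set represented by `C` is cofinal in the cut
determined by the constants. -/
def CofinalInConstants (U : Ultrafilter S) (C : S → Set V) : Prop :=
  ∀ γ, ∃ γ', ∀ᶠ s in U, (C s ∩ Ioc γ γ').Nonempty

theorem exists_forall_lt_of_not_cofinalInConstants {C : S → Set V}
    (hC : ¬ CofinalInConstants U C) : ∃ γ, ∀ γ', ∀ᶠ s in U, ∀ c ∈ C s, γ < c → γ' < c := by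
  simp only [CofinalInConstants, not_forall, not_exists, ← Ultrafilter.eventually_not] at hC
  obtain ⟨γ, hγ⟩ := hC
  refine ⟨γ, fun γ' => (hγ γ').mono fun s hs c hc hγc => ?_⟩
  by_contra hcγ'
  exact hs ⟨c, hc, hγc, not_lt.1 hcγ'⟩

theorem exists_lt_tendsto_atTop [NoMaxOrder V] {κ : Cardinal.{u}}
    (hcof : ∀ a : V, Order.cof (Iio a) < κ)
    (hC : ∀ C : S → Set V, (∀ s, #(C s) < κ) → ¬ CofinalInConstants U C)
    {g : S → V} (hg : Tendsto g U atTop) :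
    ∃ f : S → V, Tendsto f U atTop ∧ ∀ᶠ s in U, f s < g s := by
  choose C hCcof hCcard using fun s => Order.exists_cof_eq (Iio (g s))
  obtain ⟨γ, hγ⟩ := exists_forall_lt_of_not_cofinalInConstants <| hC (fun s => Subtype.val '' C s)
    fun s => mk_image_le.trans_lt ((hCcard s).trans_lt (hcof (g s)))
  obtain ⟨x, hγx⟩ := exists_gt γ
  have hstep (s : S) : ∃ c, x < g s → c ∈ Subtype.val '' C s ∧ γ < c ∧ c < g s := by
    by_cases hx : x < g s
    · obtain ⟨c, hc, hxc⟩ := hCcof s ⟨x, hx⟩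
      exact ⟨c, fun _ => ⟨⟨c, hc, rfl⟩, hγx.trans_le hxc, c.2⟩⟩
    · exact ⟨x, fun h => absurd h hx⟩
  choose f hf using hstep
  have hxg : ∀ᶠ s in U, x < g s := hg.eventually_gt_atTop x
  refine ⟨f, tendsto_atTop.2 fun γ' => ?_, hxg.mono fun s hs => (hf s hs).2.2⟩
  filter_upwards [hγ γ', hxg] with s hs hxs
  exact (hs _ (hf s hxs).1 (hf s hxs).2.1).le

theorem exists_lt_family_tendsto_atTop [WellFoundedLT V] [NoMaxOrder V] {κ : Cardinal.{u}}
    (hcof : ∀ a : V, Order.cof (Iio a) < κ)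
    (hC : ∀ C : S → Set V, (∀ s, #(C s) < κ) → ¬ CofinalInConstants U C)
    {g : S → V} (hg : Tendsto g U atTop) {ι : Type u} (hι : #ι < κ) (F : ι → S → V) :
    ∃ f : S → V, Tendsto f U atTop ∧ ∃ γ, ∀ᶠ s in U, ∀ i, γ < F i s → f s < F i s := by
  obtain ⟨γ, hγ⟩ := exists_forall_lt_of_not_cofinalInConstants <|
    hC (fun s => range fun i => F i s) fun s => mk_range_le.trans_lt hι
  have hmin (s : S) : ∃ m, IsLeast (insert (g s) {m | γ < m ∧ ∃ i, F i s = m}) m :=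
    exists_isLeast_of_wellFoundedLT (insert_nonempty _ _)
  choose m hm using hmin
  have hmtop : Tendsto m U atTop := by
    refine tendsto_atTop.2 fun γ' => ?_
    filter_upwards [hγ γ', hg.eventually_ge_atTop γ'] with s hs hgs
    rcases (hm s).1 with h | ⟨hγm, hi⟩
    · exact hgs.trans_eq h.symm
    · exact (hs _ hi hγm).le
  obtain ⟨f, hf, hfm⟩ := exists_lt_tendsto_atTop hcof hC hmtop
  exact ⟨f, hf, γ, hfm.mono fun s hs i hi => hs.trans_le ((hm s).2 (.inr ⟨hi, i, rfl⟩))⟩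

theorem exists_cofinalInConstants [WellFoundedLT V] [NoMaxOrder V] {κ : Cardinal.{u}} (hκ : ℵ₀ < κ)
    (hcof : ∀ a : V, Order.cof (Iio a) < κ) (hV : κ < Order.cof V) (hU : ¬ Decomposable U κ)
    {g : S → V} (hg : Tendsto g U atTop) :
    ∃ C : S → Set V, (∀ s, #(C s) < κ) ∧ CofinalInConstants U C := by
  by_contra! hC
  -- A `κ`-sequence of unbounded functions, each below all its predecessors modulo `U`: at a single
  -- point only finitely many of these descents can be realized.
  obtain ⟨f, hf⟩ := exists_transfinite_sequence (α := κ.ord.ToType) (β := S → V)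
    (fun ξ F f => Tendsto f U atTop ∧ ∃ γ, ∀ᶠ s in U, ∀ η, γ < F η s → f s < F η s)
    fun ξ F => exists_lt_family_tendsto_atTop hcof hC hg (mk_Iio_toType_lt ξ) F
  choose hftop γ hγ using hf
  obtain ⟨b, hb⟩ := exists_forall_lt_of_mk_lt_cof γ (by rwa [mk_ord_toType])
  refine hU (RegularUltrafilter.decomposable hκ
    ⟨fun ξ => {s | b < f ξ s ∧ ∀ η < ξ, b < f η s → f ξ s < f η s}, fun ξ => ?_, fun s => ?_⟩)
  · filter_upwards [(hftop ξ).eventually_gt_atTop b, hγ ξ] with s hbs hs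
    exact ⟨hbs, fun η hη h => hs ⟨η, hη⟩ ((hb ξ).trans h)⟩
  · have hanti : StrictAnti fun ξ : {ξ | b < f ξ s ∧ ∀ η < ξ, b < f η s → f ξ s < f η s} => f ξ s :=
      fun η ξ h => ξ.2.2 η h η.2.1
    exact lt_aleph0_iff_finite.2 (finite_of_strictAnti hanti)

theorem CofinalInConstants.regularUltrafilter {κ θ : Cardinal.{u}} (hθ : θ.IsRegular)
    {C : S → Set θ.ord.ToType} (hCκ : ∀ s, #(C s) < κ) (hC : CofinalInConstants U C) :
    RegularUltrafilter U κ θ := by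
  choose next hnext using hC
  obtain ⟨G, hG⟩ := exists_transfinite_sequence (α := θ.ord.ToType)
    (fun ξ G γ => ∀ η, next (G η) < γ) fun ξ G => exists_forall_lt_of_mk_lt_cof _ <| by
      rw [cof_toType_of_isRegular hθ]
      exact mk_Iio_toType_lt ξ
  refine ⟨fun ξ => {s | (C s ∩ Ioc (G ξ) (next (G ξ))).Nonempty}, fun ξ => hnext (G ξ), fun s => ?_⟩
  choose c hc using fun ξ : {ξ | (C s ∩ Ioc (G ξ) (next (G ξ))).Nonempty} => ξ.2
  have hmono : StrictMono c := fun η ξ h =>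
    ((hc η).2.2.trans_lt (hG ξ ⟨η, h⟩)).trans (hc ξ).2.1
  exact (mk_le_of_injective (f := fun ξ => (⟨c ξ, (hc ξ).1⟩ : C s)) fun ξ η h =>
    hmono.injective (congrArg Subtype.val h)).trans_lt (hCκ s)

theorem regularUltrafilter_succ_of_not_decomposable {κ : Cardinal.{u}} (hκ : ℵ₀ < κ)
    (hsing : κ.ord.cof < κ) (hU : ¬ Decomposable U κ) {g : S → (Order.succ κ).ord.ToType}
    (hg : Tendsto g U atTop) : RegularUltrafilter U κ (Order.succ κ) := by
  have hreg : (Order.succ κ).IsRegular := isRegular_succ hκ.le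
  have : NoMaxOrder (Order.succ κ).ord.ToType := noMaxOrder hreg.aleph0_le
  obtain ⟨C, hCκ, hC⟩ := exists_cofinalInConstants hκ
    (fun a => cof_lt_of_mk_le hsing (Order.lt_succ_iff.1 (mk_Iio_toType_lt a)))
    (by rw [cof_toType_of_isRegular hreg]; exact Order.lt_succ κ) hU hg
  exact hC.regularUltrafilter hreg hCκ

end Regularity

section ExactUpperBound

variable {A I V : Type u} [LinearOrder V] {F : Filter I}

/-- `p` is an exact upper bound of the family `h` modulo `F`: it is an upper bound, and every
function is eventually dominated by some `h α` on the set where it lies below `p`. -/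
def IsExactUpperBound (F : Filter I) (h : A → I → V) (p : I → V) : Prop :=
  (∀ α, ∀ᶠ i in F, h α i < p i) ∧ ∀ q : I → V, ∃ α, ∀ᶠ i in F, q i < p i → q i < h α i

theorem eventuallyLE_of_strict [LinearOrder A] {h : A → I → V}
    (hstrict : ∀ ⦃α β⦄, α < β → ∀ᶠ i in F, h α i < h β i) ⦃α β : A⦄ (hαβ : α ≤ β) :
    h α ≤ᶠ[F] h β := by
  rcases hαβ.eq_or_lt with rfl | hlt
  · exact .rfl
  · exact (hstrict hlt).mono fun _ => le_of_lt

theorem exists_rounding [LinearOrder A] [WellFoundedLT V] {h : A → I → V}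
    (hmono : ∀ ⦃α β⦄, α ≤ β → h α ≤ᶠ[F] h β) {T : I → Set V} (hT : ∀ α i, ∃ x ∈ T i, h α i ≤ x)
    (hcard : #(∀ i, T i) < Order.cof A) :
    ∃ p : I → V, (∀ α, h α ≤ᶠ[F] p) ∧ ∃ α, ∀ i, IsLeast {x ∈ T i | h α i ≤ x} (p i) := by
  have hleast (α : A) (i : I) : ∃ x : T i, IsLeast {x ∈ T i | h α i ≤ x} x :=
    let ⟨x, hx⟩ := exists_isLeast_of_wellFoundedLT (hT α i)
    ⟨⟨x, hx.1.1⟩, hx⟩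
  choose R hR using hleast
  have hcover : IsCofinal (⋃ p, R ⁻¹' {p}) := by
    rw [← preimage_iUnion, iUnion_of_singleton, preimage_univ]
    exact .univ
  obtain ⟨p, hp⟩ := isCofinal_of_isCofinal_iUnion hcover hcard
  have hfiber (α : A) : ∃ β, α ≤ β ∧ ∀ i, IsLeast {x ∈ T i | h β i ≤ x} (p i) := by
    obtain ⟨β, rfl, hαβ⟩ := hp α
    exact ⟨β, hαβ, hR β⟩
  have : Nonempty A := Order.cof_ne_zero_iff.1 (bot_le.trans_lt hcard).ne'
  refine ⟨fun i => p i, fun α => ?_, (hfiber (Classical.arbitrary A)).imp fun _ => And.right⟩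
  obtain ⟨β, hαβ, hβ⟩ := hfiber α
  exact (hmono hαβ).mono fun i hi => hi.trans (hβ i).1.2

theorem exists_isExactUpperBound [LinearOrder A] [NoMaxOrder A] [WellFoundedLT V] [Infinite I]
    {h : A → I → V} (hstrict : ∀ ⦃α β⦄, α < β → ∀ᶠ i in F, h α i < h β i) {k : I → V}
    (hk : ∀ α i, h α i ≤ k i) (hA : 2 ^ #I < Order.cof A) : ∃ p, IsExactUpperBound F h p := by
  let Q (p q : I → V) : Prop := ∀ α, ∃ᶠ i in F, q i < p i ∧ h α i ≤ q i
  have : Nonempty (I → V) := ⟨k⟩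
  -- If a bound with values in `T` is not exact, then some function with values in `T` witnesses it,
  -- which is impossible for the bound obtained by rounding the family up to `T`.
  obtain ⟨T, hTcard, hkT, hT⟩ := exists_closed_set k fun p => Classical.epsilon (Q p)
  have hmono := eventuallyLE_of_strict hstrict
  have hcard : #(I → T) < Order.cof A := by
    refine lt_of_le_of_lt ?_ hA
    calc #(I → T) = #T ^ #I := by simp only [mk_pi, prod_const']
      _ ≤ (2 ^ #I) ^ #I := power_le_power_right hTcard
      _ = 2 ^ #I := by rw [← power_mul, mul_eq_self (aleph0_le_mk I)]
  obtain ⟨p, hp, α₀, hleast⟩ := exists_rounding hmono (fun α i => ⟨k i, hkT i, hk α i⟩) hcard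
  refine ⟨p, fun α => ?_, fun q => ?_⟩
  · obtain ⟨β, hαβ⟩ := exists_gt α
    filter_upwards [hstrict hαβ, hp β] with i hi hpi using hi.trans_le hpi
  · by_contra! hq
    have hQ : Q p (Classical.epsilon (Q p)) := Classical.epsilon_spec
      ⟨q, fun α => (hq α).mono fun i hi => by simpa only [Classical.not_imp, not_lt] using hi⟩
    obtain ⟨i, hlt, hle⟩ := (hQ α₀).exists
    exact ((hleast i).2 ⟨hT p (fun i => (hleast i).1.1) i, hle⟩).not_gt hlt

theorem IsExactUpperBound.eventually_lt_cof [LinearOrder A] [WellFoundedLT V] {h : A → I → V}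
    {p : I → V} (hp : IsExactUpperBound F h p) (hmono : ∀ ⦃α β⦄, α ≤ β → h α ≤ᶠ[F] h β)
    {k : I → V} (hk : ∀ α i, h α i ≤ k i) {μ : Cardinal.{u}}
    (hμ : (μ + 1) ^ #I < Order.cof A) : ∀ᶠ i in F, μ < Order.cof (Iio (p i)) := by
  classical
  choose s hs hscard using fun i => Order.exists_cof_eq (Iio (p i))
  let T (i : I) : Set V :=
    insert (k i) (if μ < Order.cof (Iio (p i)) then ∅ else Subtype.val '' s i)
  have hTcard (i : I) : #(T i) ≤ μ + 1 := by
    refine mk_insert_le.trans (add_le_add_left ?_ 1)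
    split_ifs with hi
    · simp
    · exact mk_image_le.trans ((hscard i).trans_le (not_lt.1 hi))
  have hcard : #(∀ i, T i) < Order.cof A := by
    refine lt_of_le_of_lt ?_ hμ
    rw [mk_pi, ← prod_const']
    exact prod_le_prod _ _ hTcard
  obtain ⟨q, hq, α₀, hleast⟩ :=
    exists_rounding hmono (fun α i => ⟨k i, mem_insert _ _, hk α i⟩) hcard
  obtain ⟨α₁, hα₁⟩ := hp.2 q
  filter_upwards [hp.1 α₀, hα₁, hq α₁] with i hi hi₁ hqi
  by_contra hμi
  obtain ⟨x, hx, hle⟩ := hs i ⟨h α₀ i, hi⟩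
  have hxT : (x : V) ∈ T i := mem_insert_of_mem _ (by rw [if_neg hμi]; exact ⟨x, hx, rfl⟩)
  exact hqi.not_gt (hi₁ (((hleast i).2 ⟨hxT, hle⟩).trans_lt x.2))

theorem exists_eventually_forall_lt {J : Type u} [LinearOrder J] {c : I → J} {k : I → V}
    (hk : ∀ i, #(Iic (c i)) < Order.cof (Iio (k i))) {ι : Type u} (hι : #ι ≤ #J)
    {h : ι → I → V} (hh : ∀ a i, h a i < k i) :
    ∃ g : I → V, (∀ i, g i < k i) ∧ ∀ a, ∀ᶠ i in comap c atTop, h a i < g i := by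
  obtain ⟨e⟩ := hι
  have hbound (i : I) : ∃ b < k i, ∀ a, e a ≤ c i → h a i < b := by
    have hcard : #{a // e a ≤ c i} ≤ #(Iic (c i)) :=
      mk_le_of_injective (f := fun a => ⟨e a, a.2⟩) fun a b hab =>
        Subtype.ext (e.injective (congrArg Subtype.val hab))
    obtain ⟨b, hb, hlt⟩ := exists_forall_lt_of_mk_lt_cof_Iio
      (fun a : {a // e a ≤ c i} => h a i) (hcard.trans_lt (hk i))
    exact ⟨b, hb, fun a ha => hlt ⟨a, ha⟩ (hh a i)⟩
  choose g hgk hg using hbound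
  exact ⟨g, hgk, fun a => ((eventually_ge_atTop (e a)).comap c).mono fun i hi => hg i a hi⟩

theorem exists_scale {J : Type u} [LinearOrder J] {c : I → J} {k : I → V}
    (hk : ∀ i, #(Iic (c i)) < Order.cof (Iio (k i))) [LinearOrder A] [WellFoundedLT A]
    (hA : ∀ α : A, #(Iio α) ≤ #J) :
    ∃ h : A → I → V, (∀ α i, h α i < k i) ∧
      ∀ ⦃α β⦄, α < β → ∀ᶠ i in comap c atTop, h α i < h β i := by
  obtain ⟨h, hh⟩ := exists_transfinite_sequence (β := {g : I → V // ∀ i, g i < k i})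
    (fun (α : A) h g => ∀ β, ∀ᶠ i in comap c atTop, (h β).1 i < g.1 i) fun α h =>
      let ⟨g, hgk, hg⟩ := exists_eventually_forall_lt hk (hA α) fun β => (h β).2
      ⟨⟨g, hgk⟩, hg⟩
  exact ⟨fun α => (h α).1, fun α => (h α).2, fun α β hαβ => hh β ⟨α, hαβ⟩⟩

end ExactUpperBound

section Indecomposable

variable {S : Type v} {U : Ultrafilter S} {κ : Cardinal.{u}}

theorem succ_lt_of_cof_ord_lt (hsing : κ.ord.cof < κ) {μ : Cardinal.{u}} (hμ : ℵ₀ ≤ μ)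
    (h : μ < κ) : Order.succ μ < κ := by
  refine (Order.succ_le_of_lt h).lt_of_ne ?_
  rintro rfl
  exact hsing.ne (isRegular_succ hμ).cof_ord

theorem exists_comap_atTop_neBot (α : Type u) [LinearOrder α] [Nonempty α] :
    ∃ (I : Type u) (c : I → α), #I = Order.cof α ∧ (comap c atTop).NeBot := by
  obtain ⟨s, hs, hcard⟩ := Order.exists_cof_eq α
  refine ⟨s, Subtype.val, hcard, comap_neBot fun t ht => ?_⟩
  obtain ⟨a, ha⟩ := mem_atTop_sets.1 ht
  obtain ⟨b, hb, hab⟩ := hs a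
  exact ⟨⟨b, hb⟩, ha b hab⟩

theorem exists_isExactUpperBound_comap_atTop (hκ : ℵ₀ < κ) (hsing : κ.ord.cof < κ) {I : Type u}
    [Infinite I] (hpow : ∀ μ < κ, μ ^ #I ≤ κ) (c : I → κ.ord.ToType) :
    ∃ (h : (Order.succ κ).ord.ToType → I → κ.ord.ToType) (p : I → κ.ord.ToType),
      IsExactUpperBound (comap c atTop) h p ∧
        ∀ μ < κ, ∀ᶠ i in comap c atTop, μ < Order.cof (Iio (p i)) := by
  have hreg : (Order.succ κ).IsRegular := isRegular_succ hκ.le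
  have : NoMaxOrder (Order.succ κ).ord.ToType := noMaxOrder hreg.aleph0_le
  have hIic (i : I) : max ℵ₀ #(Iic (c i)) < κ := max_lt hκ (mk_Iic_toType_lt hκ.le (c i))
  choose k hk using fun i => exists_cof_Iio_eq (isRegular_succ (le_max_left ℵ₀ #(Iic (c i))))
    (succ_lt_of_cof_ord_lt hsing (le_max_left _ _) (hIic i))
  have hIio (α : (Order.succ κ).ord.ToType) : #(Iio α) ≤ #κ.ord.ToType := by
    rw [mk_ord_toType]
    exact Order.lt_succ_iff.1 (mk_Iio_toType_lt α)
  obtain ⟨h, hlt, hstrict⟩ := exists_scale (c := c) (k := k)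
    (fun i => (hk i).symm ▸ Order.lt_succ_of_le (le_max_right _ _)) hIio
  have hle (α i) : h α i ≤ k i := (hlt α i).le
  have hmono := eventuallyLE_of_strict hstrict
  have hA {μ : Cardinal.{u}} (hμ : μ < κ) : μ ^ #I < Order.cof (Order.succ κ).ord.ToType :=
    (cof_toType_of_isRegular hreg).symm ▸ Order.lt_succ_of_le (hpow μ hμ)
  obtain ⟨p, hp⟩ := exists_isExactUpperBound hstrict hle (hA (natCast_lt_aleph0.trans hκ))
  exact ⟨h, p, hp, fun μ hμ =>
    hp.eventually_lt_cof hmono hle (hA (add_lt_of_lt hκ.le hμ (one_lt_aleph0.trans hκ)))⟩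

theorem IsExactUpperBound.not_tendsto {ι I V : Type u} [LinearOrder V] {F : Filter I}
    {h : ι → I → V} {p : I → V} (hp : IsExactUpperBound F h p)
    (hcof : ∀ μ < κ, ∀ᶠ i in F, μ < Order.cof (Iio (p i))) (hV : #V ≤ κ)
    (hU : ¬ Decomposable U κ) {A : ι → Set S} (hA : ∀ α, A α ∈ U) {f : S → I}
    (hf : ∀ s, #{α | s ∈ A α} < Order.cof (Iio (p (f s)))) : ¬ Tendsto f U F := by
  intro hfF
  choose H hHp hH using fun s =>
    exists_forall_lt_of_mk_lt_cof_Iio (fun α : {α | s ∈ A α} => h α (f s)) (hf s)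
  obtain ⟨X, hX, hXU⟩ := exists_mk_lt_of_not_decomposable hU hV H
  have hbound : ∀ᶠ i in F, ∃ b < p i, ∀ x : X, x.1 < p i → x < b :=
    (hcof _ hX).mono fun i hi => exists_forall_lt_of_mk_lt_cof_Iio Subtype.val hi
  have : F.NeBot := hfF.neBot
  obtain ⟨χ, hχ⟩ := hbound.choice
  obtain ⟨α, hα⟩ := hp.2 χ
  have hAα : ∀ᶠ s in U, s ∈ A α := hA α
  obtain ⟨s, hsX, hsA, ⟨hχp, hXχ⟩, hχh, hhp⟩ :=
    (hXU.and (hAα.and (hfF.eventually (hχ.and (hα.and (hp.1 α)))))).exists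
  have hhH : h α (f s) < H s := hH s ⟨α, hsA⟩ hhp
  have hHχ : H s < χ (f s) := hXχ ⟨H s, hsX⟩ (hHp s)
  exact (hhH.trans hHχ).not_gt (hχh hχp)

theorem RegularUltrafilter.not_tendsto_atTop (hκ : ℵ₀ < κ) (hsing : κ.ord.cof < κ)
    (hpow : ∀ μ < κ, μ ^ κ.ord.cof ≤ κ) (hU : ¬ Decomposable U κ)
    (hreg : RegularUltrafilter U κ (Order.succ κ)) (t : S → κ.ord.ToType) :
    ¬ Tendsto t U atTop := by
  obtain ⟨A, hAU, hA⟩ := hreg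
  have : NoMaxOrder κ.ord.ToType := noMaxOrder hκ.le
  have : Nonempty κ.ord.ToType :=
    mk_ne_zero_iff.1 ((mk_ord_toType κ).trans_ne (aleph0_pos.trans hκ).ne')
  obtain ⟨I, c, hI, _⟩ := exists_comap_atTop_neBot κ.ord.ToType
  have : Infinite I := infinite_iff.2 (hI ▸ Order.aleph0_le_cof)
  rw [← Ordinal.cof_toType, ← hI] at hpow
  obtain ⟨h, p, hp, hcof⟩ := exists_isExactUpperBound_comap_atTop hκ hsing hpow c
  choose f hft hfA using fun s =>
    (((eventually_ge_atTop (t s)).comap c).and (hcof _ (hA s))).exists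
  exact fun ht => hp.not_tendsto hcof (mk_ord_toType κ).le hU hAU hfA
    (tendsto_comap_iff.2 (tendsto_atTop_mono hft ht))

end Indecomposable

section Counting

theorem eventually_frequently_mem {S J I : Type*} [LinearOrder J] {U : Ultrafilter S} {c : I → J}
    [(comap c atTop).NeBot] (hU : ∀ t : S → J, ¬ Tendsto t U atTop) {A : I → Set S}
    (hA : ∀ i, A i ∈ U) : ∀ᶠ s in U, ∃ᶠ i in comap c atTop, s ∈ A i := by
  have : Nonempty J := (nonempty_of_neBot (comap c atTop)).map c
  by_contra hcon
  have hbound : ∀ᶠ s in U, ∃ a, ∀ i, a ≤ c i → s ∉ A i :=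
    (Ultrafilter.eventually_not.2 hcon).mono fun s hs => by
      simpa using (atTop_basis.comap c).eventually_iff.1 (not_frequently.1 hs)
  obtain ⟨t, ht⟩ := hbound.choice
  refine hU t (tendsto_atTop.2 fun b => ?_)
  obtain ⟨i, hi⟩ := ((eventually_ge_atTop b).comap c).exists
  filter_upwards [ht, hA i] with s hs hsA
  exact hi.trans (not_le.1 fun h => hs i h hsA).le

theorem mk_setOf_frequently_mem_le {Φ I Θ : Type u} {F : Filter I} {a : Φ → I → Θ}
    (ha : ∀ x y, (∃ᶠ i in F, a x i = a y i) → x = y) (B : Set Θ) :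
    #{x | ∃ᶠ i in F, a x i ∈ B} ≤ (#B + 1) ^ #I := by
  classical
  let code (x : {x | ∃ᶠ i in F, a x i ∈ B}) (i : I) : Option B :=
    if h : a x i ∈ B then some ⟨_, h⟩ else none
  have hcode : Function.Injective code := fun x y hxy =>
    Subtype.ext <| ha x y <| x.2.mono fun i hi => by
      have h := congrFun hxy i
      simp only [code, dif_pos hi] at h
      grind
  simpa using mk_le_of_injective hcode

theorem exists_eventually_mk_le {S : Type v} {U : Ultrafilter S} {κ : Cardinal.{u}}
    (hU : ∀ t : S → κ.ord.ToType, ¬ Tendsto t U atTop) {Θ : Type u} {B : S → Set Θ}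
    (hB : ∀ s, #(B s) < κ) : ∃ ν < κ, ∀ᶠ s in U, #(B s) ≤ ν := by
  choose t ht using fun s => exists_mk_Iio_eq (hB s)
  have hbound := hU t
  simp only [tendsto_atTop, not_forall, ← Ultrafilter.eventually_not, not_le] at hbound
  obtain ⟨b, hb⟩ := hbound
  refine ⟨#(Iio b), mk_Iio_toType_lt b, hb.mono fun s hs => ?_⟩
  rw [← ht s]
  exact mk_le_mk_of_subset (Iio_subset_Iio hs.le)

theorem mk_le_of_forall_exists_frequently {S Φ I Θ : Type u} {F : Filter I} {a : Φ → I → Θ}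
    (ha : ∀ x y, (∃ᶠ i in F, a x i = a y i) → x = y) {B : S → Set Θ} {ν : Cardinal.{u}}
    (hB : ∀ x, ∃ s, #(B s) ≤ ν ∧ ∃ᶠ i in F, a x i ∈ B s) :
    #Φ ≤ #S * (ν + 1) ^ #I := by
  have hcover : (⋃ s : {s // #(B s) ≤ ν}, {x | ∃ᶠ i in F, a x i ∈ B s}) = Set.univ :=
    eq_univ_of_forall fun x =>
      let ⟨s, hs, hx⟩ := hB x
      mem_iUnion.2 ⟨⟨s, hs⟩, hx⟩
  rw [← mk_univ, ← hcover]
  refine (mk_iUnion_le _).trans (mul_le_mul' (mk_subtype_le _) (ciSup_le' fun s => ?_))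
  exact (mk_setOf_frequently_mem_le ha (B s)).trans
    (power_le_power_right (add_le_add_left s.2 1))

theorem eq_of_frequently_min_eq {J I Λ : Type*} [LinearOrder J] {c : I → J} {f g : Λ → J}
    (h : ∃ᶠ i in comap c atTop, ∀ x, min (f x) (c i) = min (g x) (c i)) : f = g := by
  funext x
  obtain ⟨i, hi, hle⟩ :=
    (h.and_eventually ((eventually_ge_atTop (max (f x) (g x))).comap c)).exists
  simpa only [min_eq_left ((le_max_left _ _).trans hle),
    min_eq_left ((le_max_right _ _).trans hle)] using hi x

theorem RegularUltrafilter.power_le {S : Type u} {U : Ultrafilter S} {κ l θ : Cardinal.{u}}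
    (hκ : ℵ₀ < κ) (hκθ : κ ≤ θ) (hS : #S ≤ θ) (hl : κ.ord.cof ≤ l) (hpow : ∀ μ < κ, μ ^ l ≤ θ)
    (hreg : RegularUltrafilter U κ θ) (hU : ∀ t : S → κ.ord.ToType, ¬ Tendsto t U atTop) :
    κ ^ l ≤ θ := by
  obtain ⟨A, hAU, hA⟩ := hreg
  obtain ⟨ν, hν, hνU⟩ := exists_eventually_mk_le hU hA
  have : Nonempty κ.ord.ToType :=
    mk_ne_zero_iff.1 ((mk_ord_toType κ).trans_ne (aleph0_pos.trans hκ).ne')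
  obtain ⟨I, c, hI, _⟩ := exists_comap_atTop_neBot κ.ord.ToType
  rw [Ordinal.cof_toType] at hI
  have hcode (i : I) : Nonempty ((l.out → Iic (c i)) ↪ θ.ord.ToType) := by
    rw [← Cardinal.le_def]
    simpa using hpow _ (mk_Iic_toType_lt hκ.le (c i))
  let e (i : I) := (hcode i).some
  let a (f : l.out → κ.ord.ToType) (i : I) : θ.ord.ToType :=
    e i fun x => ⟨min (f x) (c i), mem_Iic.2 (min_le_right _ _)⟩
  have ha (f g) (h : ∃ᶠ i in comap c atTop, a f i = a g i) : f = g :=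
    eq_of_frequently_min_eq <| h.mono fun i hi x =>
      congrArg Subtype.val (congrFun ((e i).injective hi) x)
  have hcover (f : l.out → κ.ord.ToType) :
      ∃ s, #{α | s ∈ A α} ≤ ν ∧ ∃ᶠ i in comap c atTop, a f i ∈ {α | s ∈ A α} :=
    (hνU.and (eventually_frequently_mem hU fun i => hAU (a f i))).exists
  calc κ ^ l = #(l.out → κ.ord.ToType) := by simp
    _ ≤ #S * (ν + 1) ^ #I := mk_le_of_forall_exists_frequently ha hcover
    _ ≤ θ * θ := mul_le_mul' hS <|
      (power_le_power_left (by simp) (hI.trans_le hl)).trans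
        (hpow _ (add_lt_of_lt hκ.le hν (one_lt_aleph0.trans hκ)))
    _ = θ := mul_eq_self (hκ.le.trans hκθ)

theorem power_le_of_lt_cof_ord {κ l θ : Cardinal.{u}} (hκ : ℵ₀ ≤ κ) (hκθ : κ ≤ θ)
    (hl : l < κ.ord.cof) (hpow : ∀ μ < κ, μ ^ l ≤ θ) : κ ^ l ≤ θ := by
  have hcover : (⋃ b : κ.ord.ToType, {f : l.out → κ.ord.ToType | ∀ i, f i < b}) = Set.univ :=
    eq_univ_of_forall fun f => mem_iUnion.2 <|
      exists_forall_lt_of_mk_lt_cof f (by rwa [mk_out, Ordinal.cof_toType])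
  have hfiber (b : κ.ord.ToType) : #{f : l.out → κ.ord.ToType | ∀ i, f i < b} ≤ θ := by
    have hinj : Function.Injective
        fun (f : {f : l.out → κ.ord.ToType | ∀ i, f i < b}) i => (⟨f.1 i, f.2 i⟩ : Iio b) :=
      fun f g h => Subtype.ext (funext fun i => congrArg Subtype.val (congrFun h i))
    calc _ ≤ #(l.out → Iio b) := mk_le_of_injective hinj
      _ = #(Iio b) ^ l := by simp only [mk_pi, prod_const', mk_out]
      _ ≤ θ := hpow _ (mk_Iio_toType_lt b)
  calc κ ^ l = #(l.out → κ.ord.ToType) := by simp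
    _ ≤ #κ.ord.ToType * θ := by
      rw [← mk_univ, ← hcover]
      exact (mk_iUnion_le _).trans (mul_le_mul_right (ciSup_le' hfiber) _)
    _ ≤ θ * θ := by rw [mk_ord_toType]; exact mul_le_mul_left hκθ _
    _ = θ := mul_eq_self (hκ.trans hκθ)

end Counting

theorem stmt15_general (κ l : Cardinal.{u}) (hκ : ℵ₀ ≤ κ) (hsing : κ.ord.cof < κ)
    (hpow : ∀ μ < κ, μ ^ l ≤ Order.succ κ) {S : Type v} (U : Ultrafilter S)
    (hdec : Decomposable U (Order.succ κ)) (hind : ¬ Decomposable U κ) :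
    κ ^ l ≤ Order.succ κ := by
  have hκ' : ℵ₀ < κ := hκ.lt_of_ne (by rintro rfl; simp at hsing)
  have hκsucc : κ ≤ Order.succ κ := Order.le_succ κ
  rcases lt_or_ge l κ.ord.cof with hl | hl
  · exact power_le_of_lt_cof_ord hκ hκsucc hl hpow
  by_cases hlarge : ∃ μ < κ, κ ≤ μ ^ l
  · obtain ⟨μ, hμ, hκμ⟩ := hlarge
    have hcof : ℵ₀ ≤ κ.ord.cof := by
      simpa [Ordinal.one_lt_cof_iff] using isSuccLimit_ord hκ
    have hll : l * l = l := mul_eq_self (hcof.trans hl)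
    calc κ ^ l ≤ (μ ^ l) ^ l := power_le_power_right hκμ
      _ = μ ^ l := by rw [← power_mul, hll]
      _ ≤ Order.succ κ := hpow μ hμ
  push Not at hlarge
  have hcof (μ : Cardinal.{u}) (hμ : μ < κ) : μ ^ κ.ord.cof ≤ κ := by
    obtain rfl | hμ0 := eq_or_ne μ 0
    · exact (zero_power_le _).trans (one_lt_aleph0.le.trans hκ)
    · exact (power_le_power_left hμ0 hl).trans (hlarge μ hμ).le
  obtain ⟨g, hg⟩ := hdec.exists_tendsto_atTop
  have hind' : ¬ Decomposable (U.map g) κ := fun h => hind h.of_map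
  have hreg : RegularUltrafilter (U.map g) κ (Order.succ κ) :=
    regularUltrafilter_succ_of_not_decomposable hκ' hsing hind' (g := id) hg
  exact hreg.power_le hκ' hκsucc (mk_ord_toType _).le hl hpow
    (hreg.not_tendsto_atTop hκ' hsing hcof hind')

/-- If `κ` is singular, `λ < κ`, `μ^λ ≤ κ⁺` for all `μ < κ`, and `κ⁺` carries a
`κ`-indecomposable uniform ultrafilter, then `κ^λ ≤ κ⁺`. -/
theorem stmt15 (κ l : Cardinal.{u}) (hκ : ℵ₀ ≤ κ) (hsing : κ.ord.cof < κ)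
    (hl : l < κ) (hpow : ∀ μ < κ, μ ^ l ≤ Order.succ κ)
    (hU : ∃ U : Ultrafilter (Order.succ κ).out, Uniform U ∧ ¬ Decomposable U κ) :
    κ ^ l ≤ Order.succ κ := by
  obtain ⟨U, hunif, hind⟩ := hU
  exact stmt15_general κ l hκ hsing hpow U hunif.decomposable hind
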